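/- For every bi-Heyting algebra A there exist a Boolean algebra B, an injective lattice homomorphism e : A → B preserving ⊥ and ⊤, and maps ι, c : B → A such that: e(a) ≤ b iff a ≤ ι(b) for all a ∈ A, b ∈ B (ι is a right adjoint of e); c(b) ≤ a iff b ≤ e(a) for all a ∈ A, b ∈ B (c is a left adjoint of e); a ⇨ b = ι((e a)ᶜ ⊔ e b) for all a, b ∈ A; and a >— b = c((e a)ᶜ ⊓ e b) for all a, b ∈ A. -/

import Mathlib

/-!
By the prime ideal theorem, `a ↦ {I prime | a ∉ I}` embeds `A` as a
bounded sublattice of a powerset. Take `B` to be the Boolean subalgebra generated by the image.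

Every element of `B` is a finite join of differences `e x \ e y`, because the image of `e` is a
bounded sublattice. Since `e` reflects order, `e x \ e y ≤ e a` iff `x ≤ y ⊔ a` iff `x \ y ≤ a`,
and left adjoints are computed joinwise, so `c` exists. Dually, the complement of such a join is
a finite meet of elements `(e x)ᶜ ⊔ e y`, and `e a ≤ (e x)ᶜ ⊔ e y` iff `a ⊓ x ≤ y` iff
`a ≤ x ⇨ y`, so `ι` exists. The formulas for `⇨` and `\` are these same equivalences
combined with uniqueness of adjoints.

`B` is isomorphic to the algebra of clopen sets of the dual bi-Esakia space of `A`, but no topology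
is needed.
-/

universe u

/-- The data of a Boolean algebra `B` together with an injective lattice homomorphism
`e : A → B` preserving `⊥` and `⊤`, having a right adjoint `ι : B → A`
(`e a ≤ b ↔ a ≤ ι b`) and a left adjoint `c : B → A` (`c b ≤ a ↔ b ≤ e a`), such that
the Heyting implication of `A` is recovered as `a ⇨ b = ι ((e a)ᶜ ⊔ e b)` and the
co-implication of `A` (i.e. `a >— b = b \ a`) as `a >— b = c ((e a)ᶜ ⊓ e b)`. -/
structure BiheytingBooleanEmbedding (A : Type u) [BiheytingAlgebra A] : Type (u + 1) where
  B : Type u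
  [instB : BooleanAlgebra B]
  e : A → B
  ι : B → A
  c : B → A
  inj : Function.Injective e
  map_inf : ∀ a b : A, e (a ⊓ b) = e a ⊓ e b
  map_sup : ∀ a b : A, e (a ⊔ b) = e a ⊔ e b
  map_bot : e ⊥ = ⊥
  map_top : e ⊤ = ⊤
  adj_right : ∀ (a : A) (b : B), e a ≤ b ↔ a ≤ ι b
  adj_left : ∀ (a : A) (b : B), c b ≤ a ↔ b ≤ e a
  himp_eq : ∀ a b : A, a ⇨ b = ι ((e a)ᶜ ⊔ e b)
  coimp_eq : ∀ a b : A, b \ a = c ((e a)ᶜ ⊓ e b)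

/-- The Stone map of a bounded distributive lattice: `a` is sent to the set of prime ideals
not containing it; their complements are the prime filters containing `a`. -/
def stoneMap (A : Type u) [DistribLattice A] [BoundedOrder A] :
    BoundedLatticeHom A (Set {I : Order.Ideal A // I.IsPrime}) where
  toFun a := {I | a ∉ I.1}
  map_sup' a b := by
    ext I
    simp only [Set.mem_ofPred_eq, Order.Ideal.sup_mem_iff, Set.sup_eq_union, Set.mem_union]
    tauto
  map_inf' a b := by
    ext I
    have h : a ⊓ b ∈ I.1 ↔ a ∈ I.1 ∨ b ∈ I.1 :=
      ⟨I.2.mem_or_mem, fun h => h.elim (I.1.lower inf_le_left) (I.1.lower inf_le_right)⟩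
    simp only [Set.mem_ofPred_eq, h, Set.inf_eq_inter, Set.mem_inter_iff]
    tauto
  map_top' := by
    ext I
    simpa using Order.Ideal.isProper_iff_top_notMem.1 I.2.toIsProper
  map_bot' := by
    ext I
    simp

lemma stoneMap_le_iff {A : Type u} [DistribLattice A] [BoundedOrder A] (a b : A) :
    stoneMap A a ≤ stoneMap A b ↔ a ≤ b := by
  refine ⟨fun h => ?_, fun h => OrderHomClass.mono (stoneMap A) h⟩
  by_contra hab
  have hd : Disjoint (Order.PFilter.principal a : Set A) (Order.Ideal.principal b : Set A) :=
    Set.disjoint_left.2 fun x hx hx' =>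
      hab (le_trans (Order.PFilter.mem_principal.1 hx) (Order.Ideal.mem_principal.1 hx'))
  obtain ⟨J, hJ, hbJ, haJ⟩ := DistribLattice.prime_ideal_of_disjoint_filter_ideal hd
  have ha : a ∉ J := Set.disjoint_left.1 haJ (Order.PFilter.mem_principal.2 le_rfl)
  have hJb : (⟨J, hJ⟩ : {I : Order.Ideal A // I.IsPrime}) ∈ stoneMap A b := h ha
  exact hJb (Order.Ideal.principal_le_iff.1 hbJ)

section Adjoints

variable {A C : Type*} [BiheytingAlgebra A] [BooleanAlgebra C] (e : BoundedLatticeHom A C)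

lemma sdiff_le_map_iff (he : ∀ a b, e a ≤ e b ↔ a ≤ b) (x y a : A) :
    e x \ e y ≤ e a ↔ x \ y ≤ a := by
  rw [sdiff_le_iff, ← map_sup, he, sdiff_le_iff]

lemma map_le_compl_sup_iff (he : ∀ a b, e a ≤ e b ↔ a ≤ b) (x y a : A) :
    e a ≤ (e x)ᶜ ⊔ e y ↔ a ≤ x ⇨ y := by
  rw [sup_comm, ← himp_eq, le_himp_iff, ← map_inf, he, le_himp_iff]

lemma isSublattice_range : IsSublattice (Set.range e) where
  supClosed := by
    rintro _ ⟨a, rfl⟩ _ ⟨b, rfl⟩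
    exact ⟨a ⊔ b, map_sup e a b⟩
  infClosed := by
    rintro _ ⟨a, rfl⟩ _ ⟨b, rfl⟩
    exact ⟨a ⊓ b, map_inf e a b⟩

lemma exists_left_adjoint_value (he : ∀ a b, e a ≤ e b ↔ a ≤ b) (b : C)
    (hb : b ∈ BooleanSubalgebra.closure (Set.range e)) :
    ∃ m : A, ∀ a, m ≤ a ↔ b ≤ e a := by
  induction b, hb using BooleanSubalgebra.closure_sdiff_sup_induction
    (isSublattice_range e) ⟨⊥, map_bot e⟩ ⟨⊤, map_top e⟩ with
  | sdiff x hx y hy =>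
    obtain ⟨x, rfl⟩ := hx
    obtain ⟨y, rfl⟩ := hy
    exact ⟨x \ y, fun a => (sdiff_le_map_iff e he x y a).symm⟩
  | sup x hx y hy ihx ihy =>
    obtain ⟨m, hm⟩ := ihx
    obtain ⟨n, hn⟩ := ihy
    exact ⟨m ⊔ n, fun a => by rw [sup_le_iff, sup_le_iff, hm, hn]⟩

/-- The value of the right adjoint at `bᶜ`; passing to the complement turns the normal form of
`b` as a join of differences into a meet of elements `(e x)ᶜ ⊔ e y`. -/
lemma exists_right_adjoint_value_compl (he : ∀ a b, e a ≤ e b ↔ a ≤ b) (b : C)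
    (hb : b ∈ BooleanSubalgebra.closure (Set.range e)) :
    ∃ m : A, ∀ a, e a ≤ bᶜ ↔ a ≤ m := by
  induction b, hb using BooleanSubalgebra.closure_sdiff_sup_induction
    (isSublattice_range e) ⟨⊥, map_bot e⟩ ⟨⊤, map_top e⟩ with
  | sdiff x hx y hy =>
    obtain ⟨x, rfl⟩ := hx
    obtain ⟨y, rfl⟩ := hy
    refine ⟨x ⇨ y, fun a => ?_⟩
    rw [sdiff_eq, compl_inf, compl_compl, map_le_compl_sup_iff e he]
  | sup x hx y hy ihx ihy =>
    obtain ⟨m, hm⟩ := ihx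
    obtain ⟨n, hn⟩ := ihy
    exact ⟨m ⊓ n, fun a => by rw [compl_sup, le_inf_iff, le_inf_iff, hm, hn]⟩

end Adjoints

/-- Every bi-Heyting algebra embeds into a Boolean algebra via an injective lattice
homomorphism preserving `⊥` and `⊤` which has both a right adjoint `ι` and a left
adjoint `c` recovering the Heyting implication and co-implication of `A`. -/
theorem exists_biheytingBooleanEmbedding (A : Type u) [BiheytingAlgebra A] :
    Nonempty (BiheytingBooleanEmbedding A) := by
  let e := stoneMap A
  have he : ∀ a b, e a ≤ e b ↔ a ≤ b := stoneMap_le_iff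
  let L := BooleanSubalgebra.closure (Set.range e)
  have hr : ∀ b : L, ∃ m : A, ∀ a, e a ≤ b.1 ↔ a ≤ m := fun b => by
    simpa using exists_right_adjoint_value_compl e he b.1ᶜ (BooleanSubalgebra.compl_mem b.2)
  have hl : ∀ b : L, ∃ m : A, ∀ a, m ≤ a ↔ b.1 ≤ e a := fun b =>
    exists_left_adjoint_value e he b.1 b.2
  choose ι hι using hr
  choose c hc using hl
  exact ⟨{
    B := L
    e := fun a => ⟨e a, BooleanSubalgebra.subset_closure ⟨a, rfl⟩⟩
    ι := ι
    c := c
    inj := fun a b h => by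
      have h' : e a = e b := congrArg Subtype.val h
      exact le_antisymm ((he a b).1 h'.le) ((he b a).1 h'.ge)
    map_inf := fun a b => Subtype.ext (map_inf e a b)
    map_sup := fun a b => Subtype.ext (map_sup e a b)
    map_bot := Subtype.ext (map_bot e)
    map_top := Subtype.ext (map_top e)
    adj_right := fun a b => hι b a
    adj_left := fun a b => hc b a
    himp_eq := fun a b => eq_of_forall_le_iff fun x => by
      refine (map_le_compl_sup_iff e he a b x).symm.trans (Iff.trans ?_ (hι _ x))
      exact Iff.rfl
    coimp_eq := fun a b => eq_of_forall_ge_iff fun x => by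
      refine (sdiff_le_map_iff e he b a x).symm.trans (Iff.trans ?_ (hc _ x).symm)
      rw [sdiff_eq, inf_comm]
      exact Iff.rfl }⟩
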